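/- Let P ⊂ ℝ³ be a zonotope with n ≥ 3 generators a_1, …, a_n such that any three of the generators are linearly independent. Then A(P,z) = 2(n−1) for every nonzero vector z ∈ ℝ³. -/

import Mathlib

open scoped Pointwise BigOperators

noncomputable section

/-- Scalar product on `ℝ^d`. -/
def dotp {d : ℕ} (z x : Fin d → ℝ) : ℝ := ∑ i, z i * x i

/-- Number of vertices (extreme points) of a set. -/
def nVert {d : ℕ} (S : Set (Fin d → ℝ)) : ℕ := (Set.extremePoints ℝ S).ncard

/-- `t⁻ = min {z·x : x ∈ P}`. -/
def tMin {d : ℕ} (P : Set (Fin d → ℝ)) (z : Fin d → ℝ) : ℝ := sInf (dotp z '' P)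

/-- `t⁺ = max {z·x : x ∈ P}`. -/
def tMax {d : ℕ} (P : Set (Fin d → ℝ)) (z : Fin d → ℝ) : ℝ := sSup (dotp z '' P)

/-- `A(P,z)`: the average number of vertices of the sections `P ∩ {x : z·x = t}`
over `t ∈ [t⁻, t⁺]`. -/
def avgVert {d : ℕ} (P : Set (Fin d → ℝ)) (z : Fin d → ℝ) : ℝ :=
  (tMax P z - tMin P z)⁻¹ *
    ∫ t in tMin P z..tMax P z, ((nVert (P ∩ {x | dotp z x = t}) : ℝ))

/-- A convex polytope: the convex hull of a finite point set. -/
def IsPolytope {d : ℕ} (P : Set (Fin d → ℝ)) : Prop :=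
  ∃ s : Finset (Fin d → ℝ), P = convexHull ℝ (s : Set (Fin d → ℝ))

/-- The vectors are nonzero and pairwise linearly independent. -/
def PairwiseIndep {d n : ℕ} (a : Fin n → (Fin d → ℝ)) : Prop :=
  (∀ i, a i ≠ 0) ∧ ∀ i j, i ≠ j → ∀ c : ℝ, a j ≠ c • a i

/-- A zonotope: a translate of a Minkowski sum of segments `[0, aᵢ]` with pairwise
linearly independent nonzero generators. -/
def IsZonotope {d : ℕ} (P : Set (Fin d → ℝ)) : Prop :=
  ∃ (n : ℕ) (a : Fin n → (Fin d → ℝ)) (x : Fin d → ℝ),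
    PairwiseIndep a ∧ P = {x} + ∑ i, segment ℝ 0 (a i)

/-- Central symmetry: there is `c` with `2c - P = P`. -/
def CentSymm {d : ℕ} (P : Set (Fin d → ℝ)) : Prop :=
  ∃ c : Fin d → ℝ, (fun y => (2 : ℝ) • c - y) '' P = P

/-- An edge of the hypergraph `ℱ` on the generator set `V`: a subset `W ⊆ V` spanning
a 2-dimensional subspace, maximal with this property. -/
def IsHEdge (V W : Finset (Fin 3 → ℝ)) : Prop :=
  W ⊆ V ∧ Module.finrank ℝ (Submodule.span ℝ (W : Set (Fin 3 → ℝ))) = 2 ∧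
    ∀ v ∈ V, v ∉ W →
      Module.finrank ℝ (Submodule.span ℝ (insert v (W : Set (Fin 3 → ℝ)))) = 3

/-- The degree of `v` in the hypergraph `ℱ` on `V`: the number of edges containing `v`. -/
def degF (V : Finset (Fin 3 → ℝ)) (v : Fin 3 → ℝ) : ℕ :=
  {W : Finset (Fin 3 → ℝ) | IsHEdge V W ∧ v ∈ W}.ncard

/-- The set of edges of the polytope `P` that are parallel to `v`: one-dimensional
exposed faces `[u,w]` of `P` with `w - u` a nonzero multiple of `v`. -/
def edgesParallel {d : ℕ} (P : Set (Fin d → ℝ)) (v : Fin d → ℝ) : Set (Set (Fin d → ℝ)) :=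
  {e | ∃ u w : Fin d → ℝ, u ≠ w ∧ e = segment ℝ u w ∧
    (∃ y : Fin d → ℝ, y ≠ 0 ∧ e = {x ∈ P | ∀ p ∈ P, dotp y p ≤ dotp y x}) ∧
    ∃ c : ℝ, c ≠ 0 ∧ w - u = c • v}

/-!
A generic section of a zonotope has one vertex for each edge of the zonotope that the plane crosses.
An edge parallel to `aᵢ` is crossed for a set of heights of length `|z·aᵢ|`, so if each generator
has the same number `N` of parallel edges, the vertex count integrates to `N * ∑ |z·aᵢ|`, while the
range of heights has length `∑ |z·aᵢ|`: the average is `N`.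

The edges parallel to `aᵢ` are the vertices of the zonotope projected along `aᵢ`, that is, the ways
in which a linear functional vanishing at `aᵢ` only can distribute signs over the other `n - 1`
generators. Deletion–contraction counts these sign patterns, as in Cover's function counting
theorem; in dimension three, where the projected generators are pairwise independent vectors of a
plane, there are `2 * (n - 1)` of them.
-/

open Finset Module Filter MeasureTheory Topology

/-! ### Linear dichotomies: the theorems of Cover and Gordan -/

section Reorient

variable {ι E : Type*} [AddCommGroup E] [DecidableEq ι]

/-- The family `a` with the vectors indexed outside `S` negated, so that a functional is positive
on `a j` for `j ∈ S` and negative on `a j` for `j ∉ S` exactly when it is positive on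
`reorient a S`. -/
def reorient (a : ι → E) (S : Finset ι) (j : ι) : E := if j ∈ S then a j else -a j

theorem reorient_of_mem {a : ι → E} {S : Finset ι} {j : ι} (hj : j ∈ S) :
    reorient a S j = a j := if_pos hj

theorem reorient_of_notMem {a : ι → E} {S : Finset ι} {j : ι} (hj : j ∉ S) :
    reorient a S j = -a j := if_neg hj

theorem reorient_insert_of_ne {a : ι → E} {S : Finset ι} {v j : ι} (hj : j ≠ v) :
    reorient a (insert v S) j = reorient a S j := by
  simp only [reorient, mem_insert, hj, false_or]

end Reorient

section LinearDichotomies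

variable {ι E : Type*} [AddCommGroup E] [Module ℝ E]

/-- The family `a` projected along `v`. Linear functionals on the quotient are the functionals on
`E` that vanish at `v`, so this describes the zonotope as seen in the direction `v`. -/
def contraction (a : ι → E) (v : E) : ι → E ⧸ Submodule.span ℝ {v} :=
  (Submodule.span ℝ {v}).mkQ ∘ a

/-- The vectors `a j`, `j ∈ T`, are in general position: as independent as the dimension of `E`
permits. The condition also covers index sets smaller than the dimension, hence is inherited by
subsets. -/
def InGeneralPosition (a : ι → E) (T : Finset ι) : Prop :=
  ∀ s ⊆ T, #s ≤ finrank ℝ E → LinearIndepOn ℝ a (s : Set ι)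

theorem InGeneralPosition.mono {a : ι → E} {S T : Finset ι} (h : InGeneralPosition a T)
    (hST : S ⊆ T) : InGeneralPosition a S :=
  fun s hs ↦ h s (hs.trans hST)

theorem InGeneralPosition.ne_zero {a : ι → E} {T : Finset ι} (h : InGeneralPosition a T)
    (hE : 0 < finrank ℝ E) {v : ι} (hv : v ∈ T) : a v ≠ 0 :=
  (h {v} (singleton_subset_iff.2 hv) (by rwa [card_singleton])).ne_zero
    (mem_coe.2 (mem_singleton_self v))

theorem exists_pos_forall_pos_apply_add_smul {T : Finset ι} {b : ι → E} {f : Dual ℝ E}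
    (hf : ∀ j ∈ T, 0 < f (b j)) (u : Dual ℝ E) :
    ∃ ε > (0 : ℝ), ∀ j ∈ T, 0 < (f + ε • u) (b j) := by
  have hpos : ∀ᶠ ε in 𝓝[>] (0 : ℝ), ∀ j ∈ T, 0 < (f + ε • u) (b j) := by
    refine (eventually_all_finset T).2 fun j hj ↦ ?_
    have hcont : Continuous fun ε : ℝ ↦ (f + ε • u) (b j) := by
      simp only [LinearMap.add_apply, LinearMap.smul_apply]
      fun_prop
    refine (hcont.tendsto 0).mono_left nhdsWithin_le_nhds |>.eventually_const_lt ?_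
    simpa only [zero_smul, add_zero] using hf j hj
  obtain ⟨ε, hε, hε0⟩ := (hpos.and self_mem_nhdsWithin).exists
  exact ⟨ε, hε0, hε⟩

theorem exists_dual_pos_and_exists_dual_neg_of_apply_eq_zero {T : Finset ι} {b : ι → E} {v : E}
    (hv : v ≠ 0) {f : Dual ℝ E} (hfv : f v = 0) (hf : ∀ j ∈ T, 0 < f (b j)) :
    (∃ f : Dual ℝ E, 0 < f v ∧ ∀ j ∈ T, 0 < f (b j)) ∧
      ∃ f : Dual ℝ E, f v < 0 ∧ ∀ j ∈ T, 0 < f (b j) := by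
  obtain ⟨u, hu⟩ := Projective.exists_dual_eq_one ℝ hv
  obtain ⟨ε, hε, hpos⟩ := exists_pos_forall_pos_apply_add_smul hf u
  obtain ⟨δ, hδ, hneg⟩ := exists_pos_forall_pos_apply_add_smul hf (-u)
  exact ⟨⟨_, by simpa [hfv, hu] using hε, hpos⟩, ⟨_, by simpa [hfv, hu] using hδ, hneg⟩⟩

theorem exists_dual_apply_eq_zero_of_pos_of_neg {T : Finset ι} {b : ι → E} {v : E}
    {f g : Dual ℝ E} (hfv : 0 < f v) (hgv : g v < 0) (hf : ∀ j ∈ T, 0 < f (b j))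
    (hg : ∀ j ∈ T, 0 < g (b j)) : ∃ h : Dual ℝ E, h v = 0 ∧ ∀ j ∈ T, 0 < h (b j) := by
  refine ⟨f v • g - g v • f, ?_, fun j hj ↦ ?_⟩
  · simp only [LinearMap.sub_apply, LinearMap.smul_apply, smul_eq_mul]
    ring
  · simp only [LinearMap.sub_apply, LinearMap.smul_apply, smul_eq_mul]
    linarith [mul_pos hfv (hg j hj), mul_neg_of_neg_of_pos hgv (hf j hj)]

variable [DecidableEq ι]

open Classical in
/-- The linear dichotomies of the family `a` on `T`: the subsets `S ⊆ T` that some linear functional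
separates strictly from `T \ S`. They index the vertices of the zonotope generated by `a` on `T`. -/
def linearDichotomies (a : ι → E) (T : Finset ι) : Finset (Finset ι) :=
  {S ∈ T.powerset | ∃ f : Dual ℝ E, ∀ j ∈ T, 0 < f (reorient a S j)}

theorem mem_linearDichotomies {a : ι → E} {S T : Finset ι} :
    S ∈ linearDichotomies a T ↔ S ⊆ T ∧ ∃ f : Dual ℝ E, ∀ j ∈ T, 0 < f (reorient a S j) := by
  simp only [linearDichotomies, mem_filter, mem_powerset]

theorem reorient_contraction (a : ι → E) (v : E) (S : Finset ι) (j : ι) :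
    reorient (contraction a v) S j = (Submodule.span ℝ {v}).mkQ (reorient a S j) := by
  by_cases hj : j ∈ S <;> simp [reorient, contraction, hj]

theorem mem_linearDichotomies_contraction {a : ι → E} {v : E} {S T : Finset ι} :
    S ∈ linearDichotomies (contraction a v) T ↔
      S ⊆ T ∧ ∃ f : Dual ℝ E, f v = 0 ∧ ∀ j ∈ T, 0 < f (reorient a S j) := by
  rw [mem_linearDichotomies]
  refine and_congr_right fun _ ↦ ⟨fun ⟨f, hf⟩ ↦ ?_, fun ⟨f, hfv, hf⟩ ↦ ?_⟩
  · have hv : (Submodule.span ℝ {v}).mkQ v = 0 := by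
      simp only [Submodule.mkQ_apply, Submodule.Quotient.mk_eq_zero,
        Submodule.mem_span_singleton_self]
    refine ⟨f ∘ₗ Submodule.mkQ _, by rw [LinearMap.comp_apply, hv, map_zero], fun j hj ↦ ?_⟩
    simpa only [reorient_contraction, LinearMap.comp_apply] using hf j hj
  · have hker : Submodule.span ℝ {v} ≤ LinearMap.ker f := by
      simpa only [Submodule.span_singleton_le_iff_mem, LinearMap.mem_ker] using hfv
    refine ⟨Submodule.liftQ _ f hker, fun j hj ↦ ?_⟩
    simpa only [reorient_contraction, Submodule.mkQ_apply, Submodule.liftQ_apply] using hf j hj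

theorem mem_nonMemberSubfamily_linearDichotomies {a : ι → E} {S T : Finset ι} {v : ι}
    (hv : v ∉ T) :
    S ∈ (linearDichotomies a (insert v T)).nonMemberSubfamily v ↔
      S ⊆ T ∧ ∃ f : Dual ℝ E, f (a v) < 0 ∧ ∀ j ∈ T, 0 < f (reorient a S j) := by
  rw [mem_nonMemberSubfamily, mem_linearDichotomies]
  simp only [forall_mem_insert]
  constructor
  · rintro ⟨⟨hS, f, hfv, hf⟩, hvS⟩
    rw [reorient_of_notMem hvS, map_neg, Left.neg_pos_iff] at hfv
    exact ⟨(subset_insert_iff_of_notMem hvS).1 hS, f, hfv, hf⟩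
  · rintro ⟨hS, f, hfv, hf⟩
    have hvS : v ∉ S := fun h ↦ hv (hS h)
    refine ⟨⟨hS.trans (subset_insert v T), f, ?_, hf⟩, hvS⟩
    rwa [reorient_of_notMem hvS, map_neg, Left.neg_pos_iff]

theorem mem_memberSubfamily_linearDichotomies {a : ι → E} {S T : Finset ι} {v : ι} (hv : v ∉ T) :
    S ∈ (linearDichotomies a (insert v T)).memberSubfamily v ↔
      S ⊆ T ∧ ∃ f : Dual ℝ E, 0 < f (a v) ∧ ∀ j ∈ T, 0 < f (reorient a S j) := by
  have hne : ∀ j ∈ T, j ≠ v := fun j hj h ↦ hv (h ▸ hj)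
  have hreorient : ∀ f : Dual ℝ E, (∀ j ∈ T, 0 < f (reorient a (insert v S) j)) ↔
      ∀ j ∈ T, 0 < f (reorient a S j) :=
    fun f ↦ forall₂_congr fun j hj ↦ by rw [reorient_insert_of_ne (hne j hj)]
  rw [mem_memberSubfamily, mem_linearDichotomies]
  simp only [forall_mem_insert, reorient_of_mem (mem_insert_self v S), hreorient]
  constructor
  · rintro ⟨⟨hS, hf⟩, hvS⟩
    exact ⟨(insert_subset_insert_iff hvS).1 hS, hf⟩
  · rintro ⟨hS, hf⟩
    exact ⟨⟨insert_subset_insert v hS, hf⟩, fun h ↦ hv (hS h)⟩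

-- Deletion–contraction: a dichotomy of `T` extends to `insert v T` with `v` on either side exactly
-- when it is realized by a functional vanishing on `a v`, and otherwise on exactly one side.
theorem card_linearDichotomies_insert {a : ι → E} {T : Finset ι} {v : ι} (hv : v ∉ T)
    (hav : a v ≠ 0) :
    #(linearDichotomies a (insert v T)) =
      #(linearDichotomies a T) + #(linearDichotomies (contraction a (a v)) T) := by
  set P := (linearDichotomies a (insert v T)).memberSubfamily v
  set N := (linearDichotomies a (insert v T)).nonMemberSubfamily v
  have hunion : P ∪ N = linearDichotomies a T := by
    ext S
    rw [mem_union, mem_memberSubfamily_linearDichotomies hv,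
      mem_nonMemberSubfamily_linearDichotomies hv, mem_linearDichotomies, ← and_or_left]
    refine and_congr_right fun _ ↦ ⟨?_, fun ⟨f, hf⟩ ↦ ?_⟩
    · rintro (⟨f, -, hf⟩ | ⟨f, -, hf⟩) <;> exact ⟨f, hf⟩
    · rcases lt_trichotomy (f (a v)) 0 with hneg | hzero | hpos
      · exact .inr ⟨f, hneg, hf⟩
      · exact .inl (exists_dual_pos_and_exists_dual_neg_of_apply_eq_zero hav hzero hf).1
      · exact .inl ⟨f, hpos, hf⟩
  have hinter : P ∩ N = linearDichotomies (contraction a (a v)) T := by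
    ext S
    rw [mem_inter, mem_memberSubfamily_linearDichotomies hv,
      mem_nonMemberSubfamily_linearDichotomies hv, mem_linearDichotomies_contraction,
      ← and_and_left]
    refine and_congr_right fun _ ↦ ⟨?_, fun ⟨f, hfv, hf⟩ ↦ ?_⟩
    · rintro ⟨⟨f, hfv, hf⟩, g, hgv, hg⟩
      exact exists_dual_apply_eq_zero_of_pos_of_neg hfv hgv hf hg
    · exact exists_dual_pos_and_exists_dual_neg_of_apply_eq_zero hav hfv hf
  rw [← card_memberSubfamily_add_card_nonMemberSubfamily v, ← hunion, ← hinter,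
    card_union_add_card_inter]

theorem finrank_quotient_span_singleton_add_one [FiniteDimensional ℝ E] {v : E} (hv : v ≠ 0) :
    finrank ℝ (E ⧸ Submodule.span ℝ {v}) + 1 = finrank ℝ E := by
  rw [← finrank_span_singleton (K := ℝ) hv, Submodule.finrank_quotient_add_finrank]

theorem InGeneralPosition.contraction [FiniteDimensional ℝ E] {a : ι → E} {T : Finset ι} {v : ι}
    (h : InGeneralPosition a (insert v T)) (hv : v ∉ T) (hav : a v ≠ 0) :
    InGeneralPosition (contraction a (a v)) T := by
  intro s hs hcard
  have hvs : v ∉ s := fun hvs ↦ hv (hs hvs)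
  have hindep : LinearIndepOn ℝ a ({v} ∪ (s : Set ι)) := by
    rw [Set.singleton_union, ← coe_insert]
    refine h _ (insert_subset_insert v hs) ?_
    rw [card_insert_of_notMem hvs, ← finrank_quotient_span_singleton_add_one hav]
    exact Nat.add_le_add_right hcard 1
  have hquot := ((linearIndepOn_union_iff_quotient (by simpa using hvs)).1 hindep).2
  rwa [Set.image_singleton] at hquot

theorem linearDichotomies_empty (a : ι → E) : linearDichotomies a ∅ = {∅} := by
  ext S
  simp [mem_linearDichotomies]

theorem linearDichotomies_eq_empty_of_subsingleton [Subsingleton E] (a : ι → E) {T : Finset ι}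
    (hT : T.Nonempty) : linearDichotomies a T = ∅ := by
  obtain ⟨j, hj⟩ := hT
  refine eq_empty_of_forall_notMem fun S hS ↦ ?_
  obtain ⟨-, f, hf⟩ := mem_linearDichotomies.1 hS
  have hpos := hf j hj
  rw [Subsingleton.elim (reorient a S j) 0, map_zero] at hpos
  exact hpos.false

end LinearDichotomies

theorem sum_range_succ_choose_succ (r m : ℕ) :
    ∑ k ∈ range (r + 1), (m + 1).choose k =
      ∑ k ∈ range (r + 1), m.choose k + ∑ k ∈ range r, m.choose k := by
  rw [sum_range_succ', sum_range_succ' (fun k ↦ m.choose k)]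
  simp only [Nat.choose_succ_succ', sum_add_distrib, Nat.choose_zero_right]
  ring

/-- **Cover's function counting theorem**. -/
theorem InGeneralPosition.card_linearDichotomies {ι E : Type*} [DecidableEq ι] [AddCommGroup E]
    [Module ℝ E] [FiniteDimensional ℝ E] {a : ι → E} {T : Finset ι} (hT : T.Nonempty)
    (h : InGeneralPosition a T) :
    #(linearDichotomies a T) = 2 * ∑ k ∈ range (finrank ℝ E), (#T - 1).choose k := by
  induction hT using Finset.Nonempty.cons_induction generalizing E with
  | singleton v =>
    rcases Nat.eq_zero_or_pos (finrank ℝ E) with hE | hE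
    · have := finrank_zero_iff.1 hE
      rw [linearDichotomies_eq_empty_of_subsingleton a (singleton_nonempty v), hE]
      rfl
    · obtain ⟨r, hr⟩ := Nat.exists_eq_add_one.2 hE
      have hcard := card_linearDichotomies_insert (notMem_empty v)
        (h.ne_zero hE (mem_singleton_self v))
      rw [insert_empty_eq] at hcard
      rw [hcard, linearDichotomies_empty, linearDichotomies_empty, hr, card_singleton,
        sum_range_succ']
      simp
  | cons v T hv hT ih =>
    rw [cons_eq_insert] at h ⊢
    rcases Nat.eq_zero_or_pos (finrank ℝ E) with hE | hE
    · have := finrank_zero_iff.1 hE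
      rw [linearDichotomies_eq_empty_of_subsingleton a (insert_nonempty v T), hE]
      rfl
    · have hav : a v ≠ 0 := h.ne_zero hE (mem_insert_self v T)
      obtain ⟨m, hm⟩ := Nat.exists_eq_add_one.2 hT.card_pos
      rw [card_linearDichotomies_insert hv hav, ih (h.mono (subset_insert v T)),
        ih (h.contraction hv hav), ← finrank_quotient_span_singleton_add_one hav,
        card_insert_of_notMem hv, hm, Nat.add_sub_cancel, Nat.add_sub_cancel,
        sum_range_succ_choose_succ, mul_add]

/-- **Gordan's theorem**. -/
theorem exists_dual_pos_or_exists_mem_stdSimplex_sum_eq_zero {κ V : Type*} [Fintype κ]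
    [AddCommGroup V] [Module ℝ V] (b : κ → V) :
    (∃ f : Dual ℝ V, ∀ k, 0 < f (b k)) ∨ ∃ w ∈ stdSimplex ℝ κ, ∑ k, w k • b k = 0 := by
  classical
  set L := Fintype.linearCombination ℝ b
  by_cases hdisj : Disjoint (stdSimplex ℝ κ) (LinearMap.ker L)
  · left
    obtain ⟨φ, r, s, hφ, hrs, hker⟩ := geometric_hahn_banach_compact_closed
      (convex_stdSimplex ℝ κ) (isCompact_stdSimplex ℝ κ) (LinearMap.ker L).convex
      (LinearMap.ker L).closed_of_finiteDimensional hdisj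
    have hs : s < 0 := by simpa only [map_zero] using hker 0 (zero_mem _)
    have hφker : (-φ : (κ → ℝ) →ₗ[ℝ] ℝ) ∈ (LinearMap.ker L).dualAnnihilator := by
      refine (Submodule.mem_dualAnnihilator _).2 fun y hy ↦ ?_
      by_contra hφy
      replace hφy : φ y ≠ 0 := fun h ↦ hφy (neg_eq_zero.2 h)
      have hlt := hker _ (Submodule.smul_mem _ (s / φ y) hy)
      rw [map_smul, smul_eq_mul, div_mul_cancel₀ s hφy] at hlt
      exact hlt.false
    rw [← LinearMap.range_dualMap_eq_dualAnnihilator_ker] at hφker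
    obtain ⟨f, hf⟩ := hφker
    refine ⟨f, fun k ↦ ?_⟩
    have hfk : f (b k) = -φ (Pi.single k 1) := by
      simpa [L, Fintype.linearCombination_apply_single] using
        LinearMap.congr_fun hf (Pi.single k 1)
    have := hφ _ (single_mem_stdSimplex ℝ k)
    linarith
  · obtain ⟨w, hw, hwL⟩ := Set.not_disjoint_iff.1 hdisj
    exact .inr ⟨w, hw, hwL⟩

theorem exists_nonneg_sum_smul_eq_zero {ι V : Type*} [AddCommGroup V] [Module ℝ V] {T : Finset ι}
    {b : ι → V} (h : ¬∃ f : Dual ℝ V, ∀ j ∈ T, 0 < f (b j)) :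
    ∃ w : ι → ℝ, 0 ≤ w ∧ (∃ j ∈ T, w j ≠ 0) ∧ ∑ j ∈ T, w j • b j = 0 := by
  obtain ⟨f, hf⟩ | ⟨w, ⟨hw0, hw1⟩, hwb⟩ :=
    exists_dual_pos_or_exists_mem_stdSimplex_sum_eq_zero fun j : T ↦ b j
  · exact (h ⟨f, fun j hj ↦ hf ⟨j, hj⟩⟩).elim
  have hext : ∀ j : T, Function.extend Subtype.val w 0 j.1 = w j :=
    Subtype.val_injective.extend_apply w 0
  refine ⟨Function.extend Subtype.val w 0, Function.extend_nonneg hw0 le_rfl, ?_, ?_⟩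
  · obtain ⟨j, -, hj⟩ := exists_ne_zero_of_sum_ne_zero (hw1.trans_ne one_ne_zero)
    exact ⟨j, j.2, by rwa [hext]⟩
  · rw [← sum_coe_sort]
    simpa only [hext] using hwb

/-! ### Edges of a zonotope and vertices of its sections -/

section Zonotope

variable {ι E : Type*} [AddCommGroup E] [Module ℝ E]

/-- The zonotope with generators `a`, translated by `x`. -/
def zonotope [Fintype ι] (x : E) (a : ι → E) : Set E := {x} + ∑ i, segment ℝ 0 (a i)

/-- The point of `zonotope x a` whose coordinates are the indicator of `S`. Every vertex of the
zonotope has this form, but not conversely. -/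
def corner (x : E) (a : ι → E) (S : Finset ι) : E := x + ∑ j ∈ S, a j

/-- The translate of the open segment from `0` to `a i` that starts at `corner x a S`. It is an edge
of the zonotope, without its endpoints, for `S ∈ parallelEdges a i`. -/
def openEdge (x : E) (a : ι → E) (i : ι) (S : Finset ι) : Set E :=
  openSegment ℝ (corner x a S) (corner x a S + a i)

theorem mem_openEdge {x : E} {a : ι → E} {i : ι} {S : Finset ι} {p : E} :
    p ∈ openEdge x a i S ↔ ∃ θ ∈ Set.Ioo (0 : ℝ) 1, corner x a S + θ • a i = p := by
  simp only [openEdge, openSegment_eq_image', add_sub_cancel_left, Set.mem_image]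

theorem apply_eq_of_mem_openEdge {f : Dual ℝ E} {x : E} {a : ι → E} {i : ι} {S : Finset ι} {p : E}
    (hfi : f (a i) = 0) (hp : p ∈ openEdge x a i S) : f p = f (corner x a S) := by
  obtain ⟨θ, -, rfl⟩ := mem_openEdge.1 hp
  rw [map_add, map_smul, hfi, smul_zero, add_zero]

theorem injective_apply_add_smul {g : Dual ℝ E} {v : E} (hgv : g v ≠ 0) (c : E) :
    Function.Injective fun θ : ℝ ↦ g (c + θ • v) := by
  intro θ η h
  simpa [hgv] using h

theorem injOn_openEdge {g : Dual ℝ E} {a : ι → E} {i : ι} (hgi : g (a i) ≠ 0) (x : E)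
    (S : Finset ι) : Set.InjOn g (openEdge x a i S) := by
  intro p hp q hq hpq
  obtain ⟨θ, -, rfl⟩ := mem_openEdge.1 hp
  obtain ⟨η, -, rfl⟩ := mem_openEdge.1 hq
  rw [injective_apply_add_smul hgi _ hpq]

theorem image_openEdge (g : Dual ℝ E) (x : E) (a : ι → E) (i : ι) (S : Finset ι) :
    g '' openEdge x a i S =
      openSegment ℝ (g (corner x a S)) (g (corner x a S) + g (a i)) := by
  rw [openEdge, ← map_add]
  exact image_openSegment ℝ g.toAffineMap _ _

theorem mem_extremePoints_of_forall_apply_lt {A : Set E} {p : E} (hp : p ∈ A) (f : Dual ℝ E)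
    (hf : ∀ y ∈ A, y ≠ p → f y < f p) : p ∈ A.extremePoints ℝ := by
  refine mem_extremePoints_iff_left.2 ⟨hp, fun y₁ hy₁ y₂ hy₂ hpy ↦ by_contra fun hne ↦ ?_⟩
  obtain ⟨s, t, hs, ht, hst, rfl⟩ := hpy
  have hle : f y₂ ≤ f (s • y₁ + t • y₂) := by
    rcases eq_or_ne y₂ (s • y₁ + t • y₂) with h | h
    · exact (congrArg f h).le
    · exact (hf y₂ hy₂ h).le
  have hlt := add_lt_add_of_lt_of_le (mul_lt_mul_of_pos_left (hf y₁ hy₁ hne) hs)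
    (mul_le_mul_of_nonneg_left hle ht.le)
  rw [← add_mul, hst, one_mul, map_add, map_smul, map_smul] at hlt
  exact hlt.false

theorem mem_Icc_of_forall_ne_eq_ite [DecidableEq ι] {S : Finset ι} {i : ι} {l : ι → ℝ}
    (hi : l i ∈ Set.Icc 0 1) (hl : ∀ j ≠ i, l j = if j ∈ S then 1 else 0) :
    l ∈ Set.Icc 0 1 := by
  rw [← Set.pi_univ_Icc, Set.mem_univ_pi]
  intro j
  rcases eq_or_ne j i with rfl | hj
  · exact hi
  · rw [hl j hj]
    split_ifs <;> norm_num

theorem exists_add_smul_mem_Icc [Finite ι] [DecidableEq ι] {i : ι} {S : Finset ι} {l m : ι → ℝ}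
    (hli : l i ∈ Set.Ioo 0 1) (hl : ∀ j ≠ i, l j = if j ∈ S then 1 else 0)
    (hm : ∀ j ≠ i, if j ∈ S then m j ≤ 0 else 0 ≤ m j) :
    ∃ ε : ℝ, l + ε • m ∈ Set.Icc 0 1 ∧ (l + ε • m) i ∈ Set.Ioo 0 1 ∧
      ∀ j ≠ i, m j ≠ 0 → (l + ε • m) j ∈ Set.Ioo 0 1 := by
  have hi : ∀ᶠ ε in 𝓝[>] (0 : ℝ), (l + ε • m) i ∈ Set.Ioo 0 1 := by
    have hcont : Continuous fun ε : ℝ ↦ l i + ε * m i := by fun_prop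
    exact ((hcont.tendsto' 0 (l i) (by rw [zero_mul, add_zero])).mono_left
      nhdsWithin_le_nhds).eventually_mem (Ioo_mem_nhds hli.1 hli.2)
  have hsmall : ∀ᶠ ε in 𝓝[>] (0 : ℝ), ∀ j, ε * |m j| < 1 := by
    refine eventually_all.2 fun j ↦ ?_
    have hcont : Continuous fun ε : ℝ ↦ ε * |m j| := by fun_prop
    exact ((hcont.tendsto' 0 0 (zero_mul _)).mono_left
      nhdsWithin_le_nhds).eventually_lt_const one_pos
  obtain ⟨ε, ⟨hεi, hεm⟩, hε : 0 < ε⟩ := ((hi.and hsmall).and self_mem_nhdsWithin).exists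
  have hIoo : ∀ j ≠ i, m j ≠ 0 → (l + ε • m) j ∈ Set.Ioo 0 1 := by
    intro j hj hmj
    have hsign := hm j hj
    have hlt := hεm j
    rw [Pi.add_apply, Pi.smul_apply, smul_eq_mul, hl j hj]
    split_ifs at hsign ⊢
    · rw [abs_of_nonpos hsign] at hlt
      have := mul_neg_of_pos_of_neg hε (hsign.lt_of_ne hmj)
      constructor <;> linarith
    · rw [abs_of_nonneg hsign] at hlt
      have := mul_pos hε (hsign.lt_of_ne' hmj)
      constructor <;> linarith
  refine ⟨ε, ?_, hεi, hIoo⟩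
  rw [← Set.pi_univ_Icc, Set.mem_univ_pi]
  intro j
  rcases eq_or_ne j i with rfl | hj
  · exact Set.Ioo_subset_Icc_self hεi
  rcases eq_or_ne (m j) 0 with hmj | hmj
  · rw [Pi.add_apply, Pi.smul_apply, hmj, smul_zero, add_zero, hl j hj]
    split_ifs <;> norm_num
  · exact Set.Ioo_subset_Icc_self (hIoo j hj hmj)

theorem ite_mul_apply_reorient_nonneg [DecidableEq ι] {f : Dual ℝ E} {a : ι → E} {S : Finset ι}
    {j : ι} (hf : 0 ≤ f (reorient a S j)) {l : ι → ℝ} (hl : l ∈ Set.Icc 0 1) :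
    0 ≤ (if j ∈ S then 1 - l j else l j) * f (reorient a S j) := by
  refine mul_nonneg ?_ hf
  split_ifs
  · exact sub_nonneg.2 (hl.2 j)
  · exact hl.1 j

theorem apply_reorient_nonneg [DecidableEq ι] {f : Dual ℝ E} {a : ι → E} {S : Finset ι} {i : ι}
    (hfi : f (a i) = 0) (hf : ∀ j ≠ i, 0 < f (reorient a S j)) (j : ι) :
    0 ≤ f (reorient a S j) := by
  rcases eq_or_ne j i with rfl | hj
  · by_cases hjS : j ∈ S <;> simp [reorient, hjS, hfi]
  · exact (hf j hj).le

variable [Fintype ι]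

theorem mem_zonotope {x : E} {a : ι → E} {p : E} :
    p ∈ zonotope x a ↔
      ∃ l ∈ Set.Icc (0 : ι → ℝ) 1, x + Fintype.linearCombination ℝ a l = p := by
  rw [zonotope, ← parallelepiped_eq_sum_segment]
  simp only [parallelepiped, Set.singleton_add, Set.image_image, Set.mem_image,
    Fintype.linearCombination_apply]

/-- The points with coordinates `l ± ε • m` stay in the section for small `ε`. -/
theorem linearCombination_eq_zero_of_mem_extremePoints {x : E} {a : ι → E} {g : Dual ℝ E} {t : ℝ}
    {l m : ι → ℝ} (hl : l ∈ Set.Icc 0 1)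
    (hp : x + Fintype.linearCombination ℝ a l ∈
      (zonotope x a ∩ {y | g y = t}).extremePoints ℝ)
    (hm : ∀ j, l j ∉ Set.Ioo 0 1 → m j = 0) (hgm : g (Fintype.linearCombination ℝ a m) = 0) :
    Fintype.linearCombination ℝ a m = 0 := by
  have hmem : ∀ᶠ ε in 𝓝 (0 : ℝ), l + ε • m ∈ Set.Icc 0 1 := by
    simp only [← Set.pi_univ_Icc, Set.mem_univ_pi]
    refine eventually_all.2 fun j ↦ ?_
    by_cases hj : l j ∈ Set.Ioo 0 1
    · have hcont : Continuous fun ε : ℝ ↦ l j + ε * m j := by fun_prop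
      exact (hcont.tendsto' 0 (l j) (by rw [zero_mul, add_zero])).eventually_mem
        (Icc_mem_nhds hj.1 hj.2)
    · exact .of_forall fun ε ↦ by
        simpa only [Pi.add_apply, Pi.smul_apply, hm j hj, smul_zero, add_zero] using
          ⟨hl.1 j, hl.2 j⟩
  have hneg : ∀ᶠ ε in 𝓝 (0 : ℝ), l + (-ε) • m ∈ Set.Icc 0 1 :=
    (continuous_neg.tendsto' 0 0 neg_zero).eventually hmem
  obtain ⟨ε, ⟨hε, hε'⟩, hpos⟩ :=
    (((hmem.and hneg).filter_mono nhdsWithin_le_nhds).and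
      (self_mem_nhdsWithin (s := Set.Ioi (0 : ℝ)))).exists
  have hsection : ∀ δ : ℝ, l + δ • m ∈ Set.Icc 0 1 →
      x + Fintype.linearCombination ℝ a (l + δ • m) ∈ zonotope x a ∩ {y | g y = t} := by
    refine fun δ hδ ↦ ⟨mem_zonotope.2 ⟨_, hδ, rfl⟩, ?_⟩
    rw [Set.mem_ofPred_eq, map_add (Fintype.linearCombination ℝ a), map_smul, ← add_assoc,
      map_add g, map_smul g, hgm, smul_zero, add_zero]
    exact hp.1.2
  have heq := (mem_extremePoints_iff_left.1 hp).2 _ (hsection ε hε) _ (hsection (-ε) hε')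
    ⟨1 / 2, 1 / 2, by norm_num, by norm_num, by norm_num, by
      simp only [map_add, map_smul]
      module⟩
  rw [map_add, map_smul, ← add_assoc, add_eq_left] at heq
  exact (smul_eq_zero.1 heq).resolve_left hpos.ne'

theorem eq_of_mem_extremePoints_of_mem_Ioo {x : E} {a : ι → E}
    (ha : Pairwise fun i j ↦ LinearIndependent ℝ ![a i, a j]) {g : Dual ℝ E} {t : ℝ}
    {l : ι → ℝ} (hl : l ∈ Set.Icc 0 1)
    (hp : x + Fintype.linearCombination ℝ a l ∈
      (zonotope x a ∩ {y | g y = t}).extremePoints ℝ)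
    {i j : ι} (hi : l i ∈ Set.Ioo 0 1) (hj : l j ∈ Set.Ioo 0 1) : i = j := by
  classical
  by_contra hij
  have hsum : g (a j) • a i + -g (a i) • a j = 0 := by
    have h := linearCombination_eq_zero_of_mem_extremePoints hl hp
      (m := Pi.single i (g (a j)) + Pi.single j (-g (a i)))
      (fun k hk ↦ by
        rw [Pi.add_apply, Pi.single_eq_of_ne (by rintro rfl; exact hk hi),
          Pi.single_eq_of_ne (by rintro rfl; exact hk hj), add_zero])
      (by
        simp only [map_add, Fintype.linearCombination_apply_single, map_smul, smul_eq_mul]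
        ring)
    simpa only [map_add, Fintype.linearCombination_apply_single] using h
  have hgi : g (a i) = 0 := neg_eq_zero.1 (LinearIndependent.pair_iff.1 (ha hij) _ _ hsum).2
  have hai := linearCombination_eq_zero_of_mem_extremePoints hl hp (m := Pi.single i 1)
    (fun k hk ↦ Pi.single_eq_of_ne (by rintro rfl; exact hk hi) _)
    (by rw [Fintype.linearCombination_apply_single, one_smul, hgi])
  rw [Fintype.linearCombination_apply_single, one_smul] at hai
  exact (ha hij).ne_zero 0 hai

theorem add_linearCombination_ite [DecidableEq ι] (x : E) (a : ι → E) (S : Finset ι) :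
    x + Fintype.linearCombination ℝ a (fun j ↦ if j ∈ S then 1 else 0) = corner x a S := by
  simp [corner, Fintype.linearCombination_apply]

theorem add_linearCombination_eq_corner_add_smul [DecidableEq ι] {x : E} {a : ι → E}
    {S : Finset ι} {i : ι} (hi : i ∉ S) {l : ι → ℝ} (hl : ∀ j ≠ i, l j = if j ∈ S then 1 else 0) :
    x + Fintype.linearCombination ℝ a l = corner x a S + l i • a i := by
  have hl' : l = (fun j ↦ if j ∈ S then 1 else 0) + Pi.single i (l i) := by
    ext j
    rcases eq_or_ne j i with rfl | hj
    · simp [hi]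
    · simp [hl j hj, hj]
  rw [hl', map_add, Fintype.linearCombination_apply_single, ← add_assoc, add_linearCombination_ite]
  simp [hi]

theorem mem_openEdge_iff_exists_coordinates [DecidableEq ι] {x : E} {a : ι → E}
    {S : Finset ι} {i : ι} (hi : i ∉ S) {p : E} :
    p ∈ openEdge x a i S ↔ ∃ l : ι → ℝ, l i ∈ Set.Ioo 0 1 ∧
      (∀ j ≠ i, l j = if j ∈ S then 1 else 0) ∧ x + Fintype.linearCombination ℝ a l = p := by
  rw [mem_openEdge]
  constructor
  · rintro ⟨θ, hθ, rfl⟩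
    have hl : ∀ j ≠ i, Function.update (fun j ↦ if j ∈ S then (1 : ℝ) else 0) i θ j =
        if j ∈ S then 1 else 0 := fun j hj ↦ Function.update_of_ne hj _ _
    refine ⟨_, ?_, hl, ?_⟩
    · rwa [Function.update_self]
    · rw [add_linearCombination_eq_corner_add_smul hi hl, Function.update_self]
  · rintro ⟨l, hli, hl, rfl⟩
    exact ⟨l i, hli, (add_linearCombination_eq_corner_add_smul hi hl).symm⟩

theorem openEdge_subset_zonotope {x : E} {a : ι → E} {S : Finset ι} {i : ι} (hi : i ∉ S) :
    openEdge x a i S ⊆ zonotope x a := by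
  classical
  intro p hp
  obtain ⟨l, hli, hl, rfl⟩ := (mem_openEdge_iff_exists_coordinates hi).1 hp
  exact mem_zonotope.2 ⟨l, mem_Icc_of_forall_ne_eq_ite (Set.Ioo_subset_Icc_self hli) hl, rfl⟩

theorem corner_mem_zonotope (x : E) (a : ι → E) (S : Finset ι) : corner x a S ∈ zonotope x a := by
  classical
  refine mem_zonotope.2 ⟨fun j ↦ if j ∈ S then 1 else 0, ?_, add_linearCombination_ite x a S⟩
  rw [← Set.pi_univ_Icc, Set.mem_univ_pi]
  intro j
  split_ifs <;> norm_num

variable [DecidableEq ι]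

theorem apply_corner_sub_apply_add_linearCombination (f : Dual ℝ E) (x : E) (a : ι → E)
    (S : Finset ι) (l : ι → ℝ) :
    f (corner x a S) - f (x + Fintype.linearCombination ℝ a l) =
      ∑ j, (if j ∈ S then 1 - l j else l j) * f (reorient a S j) := by
  have hcorner : f (∑ j ∈ S, a j) = ∑ j, if j ∈ S then f (a j) else 0 := by
    rw [map_sum, sum_ite_mem, univ_inter]
  rw [corner, map_add, map_add, add_sub_add_left_eq_sub, hcorner,
    Fintype.linearCombination_apply, map_sum, ← sum_sub_distrib]
  refine sum_congr rfl fun j _ ↦ ?_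
  rw [map_smul, smul_eq_mul]
  split_ifs with hj
  · rw [reorient_of_mem hj, sub_mul, one_mul]
  · rw [reorient_of_notMem hj, map_neg, mul_neg, zero_sub]

theorem apply_le_apply_corner {f : Dual ℝ E} {x : E} {a : ι → E} {S : Finset ι}
    (hf : ∀ j, 0 ≤ f (reorient a S j)) {p : E} (hp : p ∈ zonotope x a) :
    f p ≤ f (corner x a S) := by
  obtain ⟨l, hl, rfl⟩ := mem_zonotope.1 hp
  rw [← sub_nonneg, apply_corner_sub_apply_add_linearCombination]
  exact sum_nonneg fun j _ ↦ ite_mul_apply_reorient_nonneg (hf j) hl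

theorem eq_ite_of_apply_eq_apply_corner {f : Dual ℝ E} {x : E} {a : ι → E} {S : Finset ι} {i : ι}
    (hfi : f (a i) = 0) (hf : ∀ j ≠ i, 0 < f (reorient a S j)) {l : ι → ℝ}
    (hl : l ∈ Set.Icc 0 1)
    (heq : f (x + Fintype.linearCombination ℝ a l) = f (corner x a S)) :
    ∀ j ≠ i, l j = if j ∈ S then 1 else 0 := by
  intro j hj
  have hsum := apply_corner_sub_apply_add_linearCombination f x a S l
  rw [heq, sub_self, eq_comm, sum_eq_zero_iff_of_nonneg fun k _ ↦
    ite_mul_apply_reorient_nonneg (apply_reorient_nonneg hfi hf k) hl] at hsum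
  have hlj := (mul_eq_zero.1 (hsum j (mem_univ j))).resolve_right (hf j hj).ne'
  split_ifs at hlj ⊢
  · exact (sub_eq_zero.1 hlj).symm
  · exact hlj

/-- The edges of a zonotope with generators `a` that are parallel to `a i`: the set `S` stands for
`openEdge x a i S`, the set of points at which a functional vanishing on `a i`, and on no other
generator, is maximal. -/
def parallelEdges (a : ι → E) (i : ι) : Finset (Finset ι) :=
  linearDichotomies (contraction a (a i)) (univ.erase i)

theorem mem_parallelEdges {a : ι → E} {i : ι} {S : Finset ι} :
    S ∈ parallelEdges a i ↔
      i ∉ S ∧ ∃ f : Dual ℝ E, f (a i) = 0 ∧ ∀ j ≠ i, 0 < f (reorient a S j) := by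
  simp only [parallelEdges, mem_linearDichotomies_contraction, subset_erase, subset_univ, true_and,
    mem_erase, mem_univ, and_true]

theorem eq_of_mem_openEdge {x : E} {a : ι → E} {i i' : ι} {S S' : Finset ι}
    (hS : S ∈ parallelEdges a i) (hS' : S' ∈ parallelEdges a i') {p : E}
    (hp : p ∈ openEdge x a i S) (hp' : p ∈ openEdge x a i' S') : i = i' ∧ S = S' := by
  obtain ⟨hiS, f, hfi, hf⟩ := mem_parallelEdges.1 hS
  have hiS' := (mem_parallelEdges.1 hS').1
  obtain ⟨l, hli', hl', rfl⟩ := (mem_openEdge_iff_exists_coordinates hiS').1 hp'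
  have hl := eq_ite_of_apply_eq_apply_corner hfi hf
    (mem_Icc_of_forall_ne_eq_ite (Set.Ioo_subset_Icc_self hli') hl')
    (apply_eq_of_mem_openEdge hfi hp)
  obtain rfl : i = i' := by
    by_contra hne
    rw [hl i' (Ne.symm hne)] at hli'
    split_ifs at hli' <;> norm_num at hli'
  refine ⟨rfl, Finset.ext fun j ↦ ?_⟩
  rcases eq_or_ne j i with rfl | hj
  · exact iff_of_false hiS hiS'
  · have h := (hl j hj).symm.trans (hl' j hj)
    split_ifs at h with hjS hjS' hjS'
    · exact iff_of_true hjS hjS'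
    · norm_num at h
    · norm_num at h
    · exact iff_of_false hjS hjS'

theorem mem_extremePoints_of_mem_openEdge {x : E} {a : ι → E} {i : ι} {S : Finset ι}
    (hS : S ∈ parallelEdges a i) {g : Dual ℝ E} (hgi : g (a i) ≠ 0) {p : E}
    (hp : p ∈ openEdge x a i S) :
    p ∈ (zonotope x a ∩ {y | g y = g p}).extremePoints ℝ := by
  obtain ⟨hiS, f, hfi, hf⟩ := mem_parallelEdges.1 hS
  obtain ⟨θ, -, hpθ⟩ := mem_openEdge.1 hp
  refine mem_extremePoints_of_forall_apply_lt ⟨openEdge_subset_zonotope hiS hp, rfl⟩ f ?_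
  rintro y ⟨hy, hgy⟩ hne
  have hfp := apply_eq_of_mem_openEdge hfi hp
  rw [hfp]
  refine (apply_le_apply_corner (apply_reorient_nonneg hfi hf) hy).lt_of_ne fun hfy ↦ hne ?_
  obtain ⟨l, hl, rfl⟩ := mem_zonotope.1 hy
  rw [add_linearCombination_eq_corner_add_smul hiS
    (eq_ite_of_apply_eq_apply_corner hfi hf hl hfy)] at hgy ⊢
  rw [← hpθ, injective_apply_add_smul hgi _ (hgy.trans (congrArg g hpθ.symm))]

/-- The coefficients are those of a direction in which the coordinates of `corner x a S`, except
the one at `i`, do not leave `[0, 1]`. -/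
theorem exists_linearCombination_eq_zero_of_notMem_parallelEdges {a : ι → E} {i : ι}
    {S : Finset ι} (hiS : i ∉ S) (hS : S ∉ parallelEdges a i) :
    ∃ m : ι → ℝ, Fintype.linearCombination ℝ a m = 0 ∧
      (∀ j ≠ i, if j ∈ S then m j ≤ 0 else 0 ≤ m j) ∧ ∃ j ≠ i, m j ≠ 0 := by
  have hf : ¬∃ f : Dual ℝ (E ⧸ Submodule.span ℝ {a i}),
      ∀ j ∈ univ.erase i, 0 < f (reorient (contraction a (a i)) S j) :=
    fun h ↦ hS (mem_linearDichotomies.2 ⟨subset_erase.2 ⟨subset_univ S, hiS⟩, h⟩)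
  obtain ⟨w, hw, ⟨j, hj, hwj⟩, hsum⟩ := exists_nonneg_sum_smul_eq_zero hf
  have hspan : ∑ j ∈ univ.erase i, w j • reorient a S j ∈ Submodule.span ℝ {a i} := by
    rw [← Submodule.Quotient.mk_eq_zero, ← Submodule.mkQ_apply, map_sum, ← hsum]
    exact sum_congr rfl fun j _ ↦ by rw [map_smul, reorient_contraction]
  obtain ⟨c, hc⟩ := Submodule.mem_span_singleton.1 hspan
  refine ⟨Function.update (fun j ↦ if j ∈ S then -w j else w j) i c, ?_, fun j hj ↦ ?_, j,
    ne_of_mem_erase hj, ?_⟩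
  · rw [Fintype.linearCombination_apply, ← add_sum_erase _ _ (mem_univ i), Function.update_self,
      hc, ← sum_add_distrib]
    refine sum_eq_zero fun j hj ↦ ?_
    rw [Function.update_of_ne (ne_of_mem_erase hj)]
    by_cases hjS : j ∈ S <;> simp [reorient, hjS]
  · rw [Function.update_of_ne hj]
    split_ifs
    · exact neg_nonpos.2 (hw j)
    · exact hw j
  · rw [Function.update_of_ne (ne_of_mem_erase hj)]
    split_ifs
    · exact neg_ne_zero.2 hwj
    · exact hwj

theorem mem_parallelEdges_of_mem_extremePoints {x : E} {a : ι → E}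
    (ha : Pairwise fun i j ↦ LinearIndependent ℝ ![a i, a j]) {g : Dual ℝ E} {t : ℝ}
    {i : ι} {S : Finset ι} (hiS : i ∉ S) {p : E} (hp : p ∈ openEdge x a i S)
    (hext : p ∈ (zonotope x a ∩ {y | g y = t}).extremePoints ℝ) : S ∈ parallelEdges a i := by
  by_contra hS
  obtain ⟨l, hli, hl, rfl⟩ := (mem_openEdge_iff_exists_coordinates hiS).1 hp
  obtain ⟨m, hm0, hm, j, hji, hmj⟩ :=
    exists_linearCombination_eq_zero_of_notMem_parallelEdges hiS hS
  obtain ⟨ε, hε, hi, hj⟩ := exists_add_smul_mem_Icc hli hl hm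
  have heq : Fintype.linearCombination ℝ a (l + ε • m) = Fintype.linearCombination ℝ a l := by
    rw [map_add, map_smul (Fintype.linearCombination ℝ a), hm0, smul_zero, add_zero]
  rw [← heq] at hext
  exact hji (eq_of_mem_extremePoints_of_mem_Ioo ha hε hext (hj j hji hmj) hi)

theorem exists_mem_openEdge_of_mem_extremePoints {x : E} {a : ι → E}
    (ha : Pairwise fun i j ↦ LinearIndependent ℝ ![a i, a j]) {g : Dual ℝ E} {t : ℝ}
    (ht : ∀ S, g (corner x a S) ≠ t) {p : E}
    (hp : p ∈ (zonotope x a ∩ {y | g y = t}).extremePoints ℝ) :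
    ∃ i, ∃ S ∈ parallelEdges a i, p ∈ openEdge x a i S := by
  obtain ⟨l, hl, rfl⟩ := mem_zonotope.1 hp.1.1
  have hIoo : ∀ j, l j = 0 ∨ l j = 1 ∨ l j ∈ Set.Ioo 0 1 := by
    intro j
    rcases (hl.1 j).eq_or_lt with h0 | h0
    · exact .inl h0.symm
    · exact .inr ((hl.2 j).eq_or_lt.imp id fun h1 ↦ ⟨h0, h1⟩)
  obtain ⟨i, hi⟩ : ∃ i, l i ∈ Set.Ioo 0 1 := by
    by_contra! hl01
    have hl' : l = fun j ↦ if j ∈ ({j | l j = 1} : Finset ι) then 1 else 0 := by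
      ext j
      rcases hIoo j with h | h | h
      · simp [h]
      · simp [h]
      · exact (hl01 j h).elim
    have hgp : g _ = t := hp.1.2
    rw [hl', add_linearCombination_ite] at hgp
    exact ht _ hgp
  have hcoord : ∀ j ≠ i, l j = if j ∈ ({j | j ≠ i ∧ l j = 1} : Finset ι) then 1 else 0 := by
    intro j hj
    rcases hIoo j with h | h | h
    · simp [h]
    · simp [h, hj]
    · exact (hj (eq_of_mem_extremePoints_of_mem_Ioo ha hl hp h hi)).elim
  have hiS : i ∉ ({j | j ≠ i ∧ l j = 1} : Finset ι) := by simp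
  have hedge : x + Fintype.linearCombination ℝ a l ∈ openEdge x a i {j | j ≠ i ∧ l j = 1} :=
    (mem_openEdge_iff_exists_coordinates hiS).2 ⟨l, hi, hcoord, rfl⟩
  exact ⟨i, _, mem_parallelEdges_of_mem_extremePoints ha hiS hedge hp, hedge⟩

open Classical in
theorem ncard_extremePoints_zonotope_inter {x : E} {a : ι → E}
    (ha : Pairwise fun i j ↦ LinearIndependent ℝ ![a i, a j]) {g : Dual ℝ E} {t : ℝ}
    (ht : ∀ S, g (corner x a S) ≠ t) :
    ((zonotope x a ∩ {y | g y = t}).extremePoints ℝ).ncard =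
      ∑ i, #{S ∈ parallelEdges a i | t ∈ g '' openEdge x a i S} := by
  have hgi : ∀ {i S p}, p ∈ openEdge x a i S → g p = t → g (a i) ≠ 0 := fun hp hgp h ↦
    ht _ ((apply_eq_of_mem_openEdge h hp).symm.trans hgp)
  have hedge : ∀ p ∈ (zonotope x a ∩ {y | g y = t}).extremePoints ℝ,
      ∃ e : Σ _ : ι, Finset ι, e.2 ∈ parallelEdges a e.1 ∧ p ∈ openEdge x a e.1 e.2 :=
    fun p hp ↦ by
      obtain ⟨i, S, hS, hpS⟩ := exists_mem_openEdge_of_mem_extremePoints ha ht hp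
      exact ⟨⟨i, S⟩, hS, hpS⟩
  choose F hF hpF using hedge
  rw [← card_sigma, ← Set.ncard_coe_finset]
  refine Set.ncard_congr F (fun p hp ↦ ?_) (fun p q hp hq hpq ↦ ?_) fun e he ↦ ?_
  · rw [mem_coe, mem_sigma, mem_filter]
    exact ⟨mem_univ _, hF p hp, p, hpF p hp, hp.1.2⟩
  · have hq' := hpF q hq
    rw [← hpq] at hq'
    exact injOn_openEdge (hgi hq' hq.1.2) x _ (hpF p hp) hq' (hp.1.2.trans hq.1.2.symm)
  · rw [mem_coe, mem_sigma, mem_filter] at he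
    obtain ⟨-, heS, p, hp, rfl⟩ := he
    have hext := mem_extremePoints_of_mem_openEdge heS (hgi hp rfl) hp
    obtain ⟨h₁, h₂⟩ := eq_of_mem_openEdge (hF p hext) heS (hpF p hext) hp
    exact ⟨p, hext, Sigma.ext h₁ (heq_of_eq h₂)⟩

end Zonotope

/-! ### Width and the vertex integral -/

theorem volume_real_openSegment (c e : ℝ) : volume.real (openSegment ℝ c e) = |e - c| := by
  rcases eq_or_ne c e with rfl | hce
  · simp [measureReal_def]
  · rw [openSegment_eq_Ioo' hce, Real.volume_real_Ioo_of_le min_le_max, max_sub_min_eq_abs]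

theorem measurableSet_openSegment (c e : ℝ) : MeasurableSet (openSegment ℝ c e) :=
  (convex_openSegment c e).ordConnected.measurableSet

theorem intervalIntegral_indicator_openSegment {c e lo hi : ℝ}
    (h : openSegment ℝ c e ⊆ Set.Icc lo hi) :
    ∫ t in lo..hi, (openSegment ℝ c e).indicator (1 : ℝ → ℝ) t = |e - c| := by
  have hle : lo ≤ hi := Set.nonempty_Icc.1 (Set.Nonempty.mono h ⟨_, midpoint_mem_openSegment c e⟩)
  rw [intervalIntegral.integral_of_le hle, ← integral_Icc_eq_integral_Ioc,
    integral_indicator_one (measurableSet_openSegment c e),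
    measureReal_restrict_apply (measurableSet_openSegment c e), Set.inter_eq_left.2 h,
    volume_real_openSegment]

section Width

variable {ι E : Type*} [Fintype ι] [AddCommGroup E] [Module ℝ E]

theorem isGreatest_image_zonotope (g : Dual ℝ E) (x : E) (a : ι → E) :
    IsGreatest (g '' zonotope x a) (g (corner x a {i | 0 ≤ g (a i)})) := by
  classical
  refine ⟨Set.mem_image_of_mem g (corner_mem_zonotope x a _), ?_⟩
  rintro _ ⟨p, hp, rfl⟩
  refine apply_le_apply_corner (fun j ↦ ?_) hp
  by_cases hj : 0 ≤ g (a j)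
  · simp [reorient, hj]
  · simpa [reorient, hj] using (not_le.1 hj).le

theorem isLeast_image_zonotope (g : Dual ℝ E) (x : E) (a : ι → E) :
    IsLeast (g '' zonotope x a) (g (corner x a {i | g (a i) < 0})) := by
  classical
  refine ⟨Set.mem_image_of_mem g (corner_mem_zonotope x a _), ?_⟩
  rintro _ ⟨p, hp, rfl⟩
  refine neg_le_neg_iff.1 (apply_le_apply_corner (f := -g) (fun j ↦ ?_) hp)
  by_cases hj : g (a j) < 0
  · simpa [reorient, hj] using hj.le
  · simpa [reorient, hj] using not_lt.1 hj

theorem image_zonotope_subset_Icc (g : Dual ℝ E) (x : E) (a : ι → E) :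
    g '' zonotope x a ⊆ Set.Icc (sInf (g '' zonotope x a)) (sSup (g '' zonotope x a)) :=
  subset_Icc_csInf_csSup (isLeast_image_zonotope g x a).bddBelow
    (isGreatest_image_zonotope g x a).bddAbove

theorem csSup_sub_csInf_image_zonotope (g : Dual ℝ E) (x : E) (a : ι → E) :
    sSup (g '' zonotope x a) - sInf (g '' zonotope x a) = ∑ i, |g (a i)| := by
  rw [(isGreatest_image_zonotope g x a).csSup_eq, (isLeast_image_zonotope g x a).csInf_eq, corner,
    corner, map_add, map_add, add_sub_add_left_eq_sub, map_sum, map_sum, sum_filter, sum_filter,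
    ← sum_sub_distrib]
  refine sum_congr rfl fun i _ ↦ ?_
  rcases le_or_gt 0 (g (a i)) with h | h
  · rw [if_pos h, if_neg h.not_gt, abs_of_nonneg h, sub_zero]
  · rw [if_neg h.not_ge, if_pos h, abs_of_neg h, zero_sub]

end Width

section Integral

variable {ι E : Type*} [Fintype ι] [DecidableEq ι] [AddCommGroup E] [Module ℝ E]

theorem ncard_extremePoints_zonotope_inter_ae_eq {a : ι → E}
    (ha : Pairwise fun i j ↦ LinearIndependent ℝ ![a i, a j]) (g : Dual ℝ E) (x : E) :
    (fun t : ℝ ↦ (((zonotope x a ∩ {y | g y = t}).extremePoints ℝ).ncard : ℝ)) =ᵐ[volume]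
      fun t ↦ ∑ e ∈ univ.sigma (parallelEdges a),
        (g '' openEdge x a e.1 e.2).indicator (1 : ℝ → ℝ) t := by
  have hgeneric : ∀ᵐ t : ℝ, ∀ S, g (corner x a S) ≠ t :=
    eventually_countable_forall.2 fun S ↦ (volume.ae_ne _).mono fun t ht ↦ ht.symm
  filter_upwards [hgeneric] with t ht
  rw [ncard_extremePoints_zonotope_inter ha ht, sum_sigma, Nat.cast_sum]
  simp only [natCast_card_filter, Set.indicator, Pi.one_apply]

theorem integral_ncard_extremePoints_zonotope_inter {a : ι → E}
    (ha : Pairwise fun i j ↦ LinearIndependent ℝ ![a i, a j]) (g : Dual ℝ E) (x : E) :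
    ∫ t in sInf (g '' zonotope x a)..sSup (g '' zonotope x a),
      (((zonotope x a ∩ {y | g y = t}).extremePoints ℝ).ncard : ℝ) =
      ∑ i, #(parallelEdges a i) * |g (a i)| := by
  have hedge : ∀ e ∈ univ.sigma (parallelEdges a),
      ∫ t in sInf (g '' zonotope x a)..sSup (g '' zonotope x a),
        (g '' openEdge x a e.1 e.2).indicator (1 : ℝ → ℝ) t = |g (a e.1)| := fun e he ↦ by
    have hnotMem := (mem_parallelEdges.1 (mem_sigma.1 he).2).1
    have hsub := (Set.image_mono (openEdge_subset_zonotope hnotMem)).trans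
      (image_zonotope_subset_Icc g x a)
    rw [image_openEdge] at hsub ⊢
    rw [intervalIntegral_indicator_openSegment hsub, add_sub_cancel_left]
  have hintegrable : ∀ e ∈ univ.sigma (parallelEdges a), IntervalIntegrable
      ((g '' openEdge x a e.1 e.2).indicator (1 : ℝ → ℝ)) volume
      (sInf (g '' zonotope x a)) (sSup (g '' zonotope x a)) := fun e _ ↦ by
    rw [image_openEdge, intervalIntegrable_iff]
    exact (integrableOn_const (by simp)).indicator (measurableSet_openSegment _ _)
  rw [intervalIntegral.integral_congr_ae
    ((ncard_extremePoints_zonotope_inter_ae_eq ha g x).mono fun t ht _ ↦ ht),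
    intervalIntegral.integral_finsetSum hintegrable, sum_congr rfl hedge, sum_sigma]
  simp only [sum_const, nsmul_eq_mul]

end Integral

/-! ### Generators in general position -/

section GeneralPosition

variable {ι E : Type*} [Fintype ι] [AddCommGroup E] [Module ℝ E] {a : ι → E}

theorem inGeneralPosition_univ (hι : finrank ℝ E ≤ Fintype.card ι)
    (ha : ∀ s : Finset ι, #s = finrank ℝ E → LinearIndepOn ℝ a (s : Set ι)) :
    InGeneralPosition a univ := by
  intro s _ hs
  obtain ⟨t, hst, ht⟩ := exists_superset_card_eq hs hι
  exact (ha t ht).mono (coe_subset.2 hst)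

theorem InGeneralPosition.pairwise_linearIndependent (h : InGeneralPosition a univ)
    (hE : 2 ≤ finrank ℝ E) : Pairwise fun i j ↦ LinearIndependent ℝ ![a i, a j] := by
  classical
  intro i j hij
  have hpair := h {i, j} (subset_univ _) (card_le_two.trans hE)
  rw [coe_pair, LinearIndepOn.pair_iff a hij] at hpair
  exact LinearIndependent.pair_iff.2 hpair

theorem InGeneralPosition.exists_apply_ne_zero [FiniteDimensional ℝ E]
    (h : InGeneralPosition a univ) (hι : finrank ℝ E ≤ Fintype.card ι) {g : Dual ℝ E}
    (hg : g ≠ 0) : ∃ i, g (a i) ≠ 0 := by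
  by_contra! hga
  obtain ⟨s, -, hs⟩ := exists_subset_card_eq (s := (univ : Finset ι)) hι
  have hspan := (h s (subset_univ s) hs.le).span_eq_top_of_card_eq_finrank' (by simpa using hs)
  exact hg (LinearMap.ext_on_range hspan fun i ↦ hga i)

theorem InGeneralPosition.card_parallelEdges [DecidableEq ι] [FiniteDimensional ℝ E]
    (h : InGeneralPosition a univ) (hE : 0 < finrank ℝ E) (hι : 2 ≤ Fintype.card ι) (i : ι) :
    #(parallelEdges a i) =
      2 * ∑ k ∈ range (finrank ℝ E - 1), (Fintype.card ι - 2).choose k := by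
  have hai : a i ≠ 0 := h.ne_zero hE (mem_univ i)
  have hcard : #(univ.erase i) = Fintype.card ι - 1 := card_erase_of_mem (mem_univ i)
  have hnonempty : (univ.erase i).Nonempty := card_pos.1 (by omega)
  rw [← insert_erase (mem_univ i)] at h
  rw [parallelEdges, (h.contraction (notMem_erase i univ) hai).card_linearDichotomies hnonempty,
    hcard, Nat.sub_sub, ← finrank_quotient_span_singleton_add_one hai, Nat.add_sub_cancel]

end GeneralPosition

theorem zonotope_avgVert_eq_general {ι : Type*} [Fintype ι] {d : ℕ} (hd : 2 ≤ d)
    (hι : d ≤ Fintype.card ι) {a : ι → Fin d → ℝ}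
    (ha : ∀ s : Finset ι, #s = d → LinearIndepOn ℝ a (s : Set ι)) (x : Fin d → ℝ)
    {z : Fin d → ℝ} (hz : z ≠ 0) :
    avgVert ({x} + ∑ i, segment ℝ 0 (a i)) z =
      2 * ∑ k ∈ range (d - 1), ((Fintype.card ι - 2).choose k : ℝ) := by
  classical
  have hfin : finrank ℝ (Fin d → ℝ) = d := finrank_fin_fun ℝ
  have hgen : InGeneralPosition a univ :=
    inGeneralPosition_univ (hfin.trans_le hι) fun s hs ↦ ha s (hs.trans hfin)
  set g : Dual ℝ (Fin d → ℝ) := dotProductEquiv ℝ (Fin d) z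
  have hg : g ≠ 0 := (dotProductEquiv ℝ (Fin d)).map_ne_zero_iff.2 hz
  have hedges : ∀ i, (#(parallelEdges a i) : ℝ) =
      2 * ∑ k ∈ range (d - 1), ((Fintype.card ι - 2).choose k : ℝ) := fun i ↦ by
    rw [hgen.card_parallelEdges (by omega) (by omega), hfin]
    push_cast
    rfl
  have hwidth : ∑ i, |g (a i)| ≠ 0 := by
    obtain ⟨i, hi⟩ := hgen.exists_apply_ne_zero (hfin.trans_le hι) hg
    exact (sum_pos' (fun j _ ↦ abs_nonneg _) ⟨i, mem_univ i, abs_pos.2 hi⟩).ne'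
  calc avgVert (zonotope x a) z
      = (∑ i, |g (a i)|)⁻¹ * ∑ i, #(parallelEdges a i) * |g (a i)| :=
        congrArg₂ (fun w v : ℝ ↦ w⁻¹ * v) (csSup_sub_csInf_image_zonotope g x a)
          (integral_ncard_extremePoints_zonotope_inter
            (hgen.pairwise_linearIndependent (hd.trans_eq hfin.symm)) g x)
    _ = _ := by simp only [hedges, ← mul_sum, inv_mul_eq_div, mul_div_cancel_right₀ _ hwidth]

theorem linearIndepOn_of_card_eq_three {ι R M : Type*} [Semiring R] [AddCommMonoid M] [Module R M]
    {a : ι → M} (h3 : ∀ i j k, i ≠ j → i ≠ k → j ≠ k → LinearIndependent R ![a i, a j, a k])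
    {s : Finset ι} (hs : #s = 3) : LinearIndepOn R a (s : Set ι) := by
  let e := (s.equivFinOfCardEq hs).symm
  have hne : ∀ {m n : Fin 3}, m ≠ n → (e m : ι) ≠ e n :=
    (Subtype.val_injective.comp e.injective).ne
  have hvec : ![a (e 0), a (e 1), a (e 2)] = (fun i : s ↦ a i) ∘ e := by
    ext m
    fin_cases m <;> rfl
  have h := h3 (e 0) (e 1) (e 2) (hne (by decide)) (hne (by decide)) (hne (by decide))
  rwa [hvec, linearIndependent_equiv] at h

/-- If `P ⊂ ℝ³` is a zonotope with `n ≥ 3` generators any three of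
which are linearly independent, then `A(P,z) = 2(n-1)` for every nonzero `z`. -/
theorem zonotope_avgVert_eq (n : ℕ) (hn : 3 ≤ n) (a : Fin n → (Fin 3 → ℝ))
    (h3 : ∀ i j k : Fin n, i ≠ j → i ≠ k → j ≠ k →
      LinearIndependent ℝ ![a i, a j, a k])
    (x : Fin 3 → ℝ) (P : Set (Fin 3 → ℝ))
    (hP : P = {x} + ∑ i, segment ℝ 0 (a i))
    (z : Fin 3 → ℝ) (hz : z ≠ 0) :
    avgVert P z = 2 * ((n : ℝ) - 1) := by
  rw [hP, zonotope_avgVert_eq_general (by norm_num) (by rwa [Fintype.card_fin])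
    (fun s hs ↦ linearIndepOn_of_card_eq_three h3 hs) x hz, Fintype.card_fin]
  simp only [Nat.reduceSub, sum_range_succ, range_zero, sum_empty, Nat.choose_zero_right,
    Nat.choose_one_right, Nat.cast_sub (show 2 ≤ n by omega)]
  ring
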